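/- The real polynomial Bohnenblust–Hille constants satisfy limsup_{m→∞} D_{ℝ,m}^{1/m} ≥ 2. -/

import Mathlib

open MvPolynomial Filter

/-- The sup norm of a real polynomial in `n` variables over the cube `[-1,1]^n`. -/
noncomputable def supNorm {n : ℕ} (P : MvPolynomial (Fin n) ℝ) : ℝ :=
  sSup {y : ℝ | ∃ x : Fin n → ℝ, (∀ i, |x i| ≤ 1) ∧ y = |eval x P|}

/-- The `ℓ_p` norm of the coefficients of a real polynomial. -/
noncomputable def lpNorm {n : ℕ} (p : ℝ) (P : MvPolynomial (Fin n) ℝ) : ℝ :=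
  (∑ α ∈ P.support, |coeff α P| ^ p) ^ (1 / p)

/-- The real polynomial Bohnenblust–Hille constant `D_{ℝ,m}`. -/
noncomputable def BHconst (m : ℕ) : ℝ :=
  sInf {D : ℝ | 0 < D ∧ ∀ (n : ℕ) (P : MvPolynomial (Fin n) ℝ),
    P.IsHomogeneous m → lpNorm (2 * m / (m + 1)) P ≤ D * supNorm P}

/-- The real polynomial Bohnenblust–Hille constant `D_{ℝ,m}(n)` in a fixed number `n`
of variables. -/
noncomputable def BHconstN (m n : ℕ) : ℝ :=
  sInf {D : ℝ | 0 < D ∧ ∀ P : MvPolynomial (Fin n) ℝ,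
    P.IsHomogeneous m → lpNorm (2 * m / (m + 1)) P ≤ D * supNorm P}


theorem supNorm_bddAbove {n : ℕ} (P : MvPolynomial (Fin n) ℝ) :
    BddAbove {y : ℝ | ∃ x : Fin n → ℝ, (∀ i, |x i| ≤ 1) ∧ y = |eval x P|} := by
  refine ⟨∑ α ∈ P.support, |coeff α P|, ?_⟩
  rintro y ⟨x, hx, rfl⟩
  rw [eval_eq']
  refine (Finset.abs_sum_le_sum_abs _ _).trans (Finset.sum_le_sum fun α _ => ?_)
  rw [abs_mul, Finset.abs_prod]
  refine mul_le_of_le_one_right (abs_nonneg _) (Finset.prod_le_one (fun _ _ => abs_nonneg _) ?_)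
  intro i _
  rw [abs_pow]
  exact pow_le_one₀ (abs_nonneg _) (hx i)

theorem abs_eval_le_supNorm {n : ℕ} (P : MvPolynomial (Fin n) ℝ) (x : Fin n → ℝ)
    (hx : ∀ i, |x i| ≤ 1) : |eval x P| ≤ supNorm P :=
  le_csSup (supNorm_bddAbove P) ⟨x, hx, rfl⟩

theorem supNorm_le {n : ℕ} (P : MvPolynomial (Fin n) ℝ) (C : ℝ)
    (h : ∀ x : Fin n → ℝ, (∀ i, |x i| ≤ 1) → |eval x P| ≤ C) : supNorm P ≤ C := by
  refine csSup_le ⟨_, 0, by simp, rfl⟩ ?_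
  rintro y ⟨x, hx, rfl⟩
  exact h x hx

theorem supNorm_nonneg {n : ℕ} (P : MvPolynomial (Fin n) ℝ) : 0 ≤ supNorm P :=
  (abs_nonneg _).trans (abs_eval_le_supNorm P 0 (by simp))

theorem vand_bound (n : ℕ) (x : Fin n → ℝ) (hx : ∀ i, |x i| ≤ 1) :
    |(Matrix.vandermonde x).det| * 2 ^ (n.choose 2) ≤ n.factorial * 2 ^ n := by
  have hT : ∀ k : ℕ, (Polynomial.Chebyshev.T ℝ (k : ℤ)).leadingCoeff = 2 ^ (k - 1) := by
    intro k; rw [Polynomial.Chebyshev.leadingCoeff_T]; simp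
  have h1 := Matrix.det_eval_matrixOfPolynomials_eq_det_vandermonde x
    (fun k : Fin n => Polynomial.C ((2 : ℝ) ^ ((k : ℕ) - 1))⁻¹ *
      Polynomial.Chebyshev.T ℝ ((k : ℕ) : ℤ))
    (fun k => by
      rw [Polynomial.natDegree_C_mul (by positivity), Polynomial.Chebyshev.natDegree_T]; simp)
    (fun k => by
      rw [Polynomial.Monic, Polynomial.leadingCoeff_mul, hT, Polynomial.leadingCoeff_C]
      exact inv_mul_cancel₀ (by positivity))
  rw [h1]
  have h2 := Matrix.det_mul_row (fun k : Fin n => ((2 : ℝ) ^ ((k : ℕ) - 1))⁻¹)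
    (Matrix.of fun i j : Fin n => (Polynomial.Chebyshev.T ℝ ((j : ℕ) : ℤ)).eval (x i))
  simp only [Polynomial.eval_mul, Polynomial.eval_C]
  simp only [Matrix.of_apply] at h2
  rw [h2, abs_mul]
  have h3 : |(Matrix.of fun i j : Fin n =>
      (Polynomial.Chebyshev.T ℝ ((j : ℕ) : ℤ)).eval (x i)).det| ≤ n.factorial := by
    have := Matrix.det_le (A := Matrix.of fun i j : Fin n =>
      (Polynomial.Chebyshev.T ℝ ((j : ℕ) : ℤ)).eval (x i)) (abv := AbsoluteValue.abs) (x := 1)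
      (fun i j => Polynomial.Chebyshev.abs_eval_T_real_le_one _ (hx i))
    simpa using this
  have h4 : |∏ k : Fin n, ((2 : ℝ) ^ ((k : ℕ) - 1))⁻¹| * 2 ^ (n.choose 2) ≤ 2 ^ n := by
    rw [Finset.abs_prod]
    have : (2 : ℝ) ^ (n.choose 2) = ∏ k : Fin n, (2 : ℝ) ^ (k : ℕ) := by
      rw [Finset.prod_pow_eq_pow_sum, Fin.sum_univ_eq_sum_range (fun i => i),
        Finset.sum_range_id, Nat.choose_two_right]
    rw [this, ← Finset.prod_mul_distrib]
    have h5 : (2 : ℝ) ^ n = ∏ k : Fin n, (2 : ℝ) := by simp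
    rw [h5]
    refine Finset.prod_le_prod (fun _ _ => by positivity) fun k _ => ?_
    rw [abs_of_pos (by positivity), inv_mul_le_iff₀ (by positivity), ← pow_succ]
    exact pow_le_pow_right₀ (by norm_num) (by omega)
  calc _ = |(Matrix.of fun i j : Fin n =>
      (Polynomial.Chebyshev.T ℝ ((j : ℕ) : ℤ)).eval (x i)).det| *
        (|∏ k : Fin n, ((2 : ℝ) ^ ((k : ℕ) - 1))⁻¹| * 2 ^ (n.choose 2)) := by ring
    _ ≤ _ := by gcongr

noncomputable def vandP (n : ℕ) : MvPolynomial (Fin n) ℝ :=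
  (Matrix.vandermonde (fun i : Fin n => (X i : MvPolynomial (Fin n) ℝ))).det

theorem vandP_hom (n : ℕ) : (vandP n).IsHomogeneous (n.choose 2) := by
  have : n.choose 2 = ∑ i : Fin n, ∑ j ∈ Finset.Ioi i, 1 := by
    simp only [Finset.sum_const, Fin.card_Ioi, smul_eq_mul, mul_one]
    rw [Fin.sum_univ_eq_sum_range (fun i => n - 1 - i), Finset.sum_range_reflect (fun i => i),
      Finset.sum_range_id, Nat.choose_two_right]
  rw [vandP, Matrix.det_vandermonde, this]
  refine IsHomogeneous.prod _ _ _ fun i _ => IsHomogeneous.prod _ _ _ fun j _ => ?_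
  exact (isHomogeneous_X _ _).sub (isHomogeneous_X _ _)

theorem vandP_eval (n : ℕ) (x : Fin n → ℝ) : eval x (vandP n) = (Matrix.vandermonde x).det := by
  simp [vandP, Matrix.det_vandermonde]

theorem vandP_coeff (n : ℕ) : ∃ α ∈ (vandP n).support, 1 ≤ |coeff α (vandP n)| := by
  have h0 : vandP n ≠ 0 := by
    rw [vandP, Matrix.det_vandermonde_ne_zero_iff]
    exact X_injective
  have hm : vandP n = map (Int.castRingHom ℝ)
      (Matrix.vandermonde (fun i : Fin n => (X i : MvPolynomial (Fin n) ℤ))).det := by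
    simp [vandP, Matrix.det_vandermonde]
  obtain ⟨α, hα⟩ := support_nonempty.2 h0
  refine ⟨α, hα, ?_⟩
  rw [mem_support_iff] at hα
  rw [hm, coeff_map] at hα ⊢
  simp only [eq_intCast, ne_eq, Int.cast_eq_zero] at hα ⊢
  exact_mod_cast Int.one_le_abs hα

theorem one_le_lpNorm_vandP (n : ℕ) (p : ℝ) (hp : 0 < p) : 1 ≤ lpNorm p (vandP n) := by
  obtain ⟨α, hα, h1⟩ := vandP_coeff n
  refine Real.one_le_rpow ?_ (by positivity)
  calc (1 : ℝ) ≤ |coeff α (vandP n)| ^ p := Real.one_le_rpow h1 hp.le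
    _ ≤ _ := Finset.single_le_sum (f := fun α => |coeff α (vandP n)| ^ p)
      (fun _ _ => by positivity) hα

theorem vand_lower (n : ℕ) (hn : 2 ≤ n) (D : ℝ) (hD : 0 < D)
    (h : lpNorm (2 * (n.choose 2 : ℕ) / ((n.choose 2 : ℕ) + 1)) (vandP n) ≤ D * supNorm (vandP n)) :
    2 ^ (n.choose 2) / (n.factorial * 2 ^ n) ≤ D := by
  have hm : 0 < n.choose 2 := Nat.choose_pos hn
  have h1 := one_le_lpNorm_vandP n (2 * (n.choose 2 : ℕ) / ((n.choose 2 : ℕ) + 1)) (by positivity)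
  have h2 : supNorm (vandP n) ≤ n.factorial * 2 ^ n / 2 ^ (n.choose 2) := by
    refine supNorm_le _ _ fun x hx => ?_
    rw [le_div_iff₀ (by positivity), vandP_eval]
    exact vand_bound n x hx
  have h3 : (1 : ℝ) ≤ D * (n.factorial * 2 ^ n / 2 ^ (n.choose 2)) :=
    (h1.trans h).trans (by gcongr)
  rw [div_le_iff₀ (by positivity)]
  rw [← mul_div_assoc, le_div_iff₀ (by positivity)] at h3
  linarith

theorem blei_aux (n m : ℕ) (s : Finset (Fin n →₀ ℕ)) (hs : ∀ α ∈ s, ∑ i, α i = m)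
    (w : Fin n → ℝ) (hw : ∀ i, 0 ≤ w i) (hw1 : ∑ i, w i = 1) :
    ∑ α ∈ s, ∏ i, w i ^ α i ≤ 1 := by
  have h := Finset.sum_pow_eq_sum_piAntidiag (Finset.univ : Finset (Fin n)) w m
  rw [hw1, one_pow] at h
  rw [h]
  calc ∑ α ∈ s, ∏ i, w i ^ α i
      = ∑ a ∈ s.map ⟨fun α : Fin n →₀ ℕ => (α : Fin n → ℕ), DFunLike.coe_injective⟩,
          ∏ i, w i ^ a i := by rw [Finset.sum_map]; rfl
    _ ≤ ∑ a ∈ Finset.piAntidiag Finset.univ m, ∏ i, w i ^ a i := by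
        refine Finset.sum_le_sum_of_subset_of_nonneg ?_ fun a _ _ =>
          Finset.prod_nonneg fun i _ => pow_nonneg (hw i) _
        intro a ha
        obtain ⟨α, hα, rfl⟩ := Finset.mem_map.1 ha
        simp only [Finset.mem_piAntidiag, Finset.mem_univ, implies_true, and_true]
        exact hs α hα
    _ ≤ _ := by
        refine Finset.sum_le_sum fun a _ => ?_
        refine le_mul_of_one_le_left (Finset.prod_nonneg fun i _ => pow_nonneg (hw i) _) ?_
        exact_mod_cast Nat.multinomial_pos _ _

theorem blei (n m : ℕ) (hm : 1 ≤ m) (s : Finset (Fin n →₀ ℕ)) (hs : ∀ α ∈ s, ∑ i, α i = m)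
    (c : (Fin n →₀ ℕ) → ℝ) (hc : ∀ α ∈ s, 0 < c α) (σ : Fin n → ℝ) (hσ0 : ∀ k, 0 ≤ σ k)
    (hσ : ∀ k, ∑ α ∈ s, (α k : ℝ) * c α ^ 2 ≤ σ k ^ 2) :
    ∑ α ∈ s, c α ^ (2 * m / (m + 1) : ℝ) ≤ (∑ k, σ k) ^ (2 * m / (m + 1) : ℝ) := by
  have hm0 : (0 : ℝ) < m := by exact_mod_cast hm
  have hS0 : 0 ≤ ∑ k, σ k := Finset.sum_nonneg fun k _ => hσ0 k
  rcases s.eq_empty_or_nonempty with rfl | ⟨α₀, hα₀⟩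
  · simp only [Finset.sum_empty]; positivity
  have hpos : ∀ α ∈ s, ∀ k, α k ≠ 0 → 0 < σ k := by
    intro α hα k hk
    have h1 : (α k : ℝ) * c α ^ 2 ≤ σ k ^ 2 :=
      (Finset.single_le_sum (f := fun α : Fin n →₀ ℕ => (α k : ℝ) * c α ^ 2)
        (fun _ _ => by positivity) hα).trans (hσ k)
    have h2 : 0 < (α k : ℝ) * c α ^ 2 := by
      have := hc α hα
      have : (0 : ℝ) < α k := by exact_mod_cast Nat.pos_of_ne_zero hk
      positivity
    by_contra h3
    have : σ k = 0 := le_antisymm (not_lt.1 h3) (hσ0 k)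
    rw [this] at h1
    norm_num at h1
    linarith
  set S := ∑ k, σ k with hS
  have hSpos : 0 < S := by
    have : ∃ k, α₀ k ≠ 0 := by
      by_contra! h
      have := hs α₀ hα₀
      simp [h] at this
      omega
    obtain ⟨k, hk⟩ := this
    exact (hpos α₀ hα₀ k hk).trans_le (Finset.single_le_sum (fun k _ => hσ0 k) (Finset.mem_univ k))
  set w : Fin n → ℝ := fun k => σ k / S with hw
  have hw0 : ∀ k, 0 ≤ w k := fun k => div_nonneg (hσ0 k) hSpos.le
  have hw1 : ∑ k, w k = 1 := by
    simp only [hw]; rw [← Finset.sum_div, ← hS, div_self hSpos.ne']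
  set W : (Fin n →₀ ℕ) → ℝ := fun α => ∏ i, w i ^ α i with hWdef
  have hW : ∀ α ∈ s, 0 < W α := by
    intro α hα
    refine Finset.prod_pos fun i _ => ?_
    by_cases h : α i = 0
    · simp [h]
    · exact pow_pos (div_pos (hpos α hα i h) hSpos) _
  set p : ℝ := 2 * m / (m + 1) with hp
  -- AM-GM bound
  have hAM : ∀ α ∈ s, W α ^ (-(1 / m : ℝ)) ≤ ∑ k, (α k / m : ℝ) * (w k)⁻¹ := by
    intro α hα
    have hsum : ∑ k, (α k / m : ℝ) = 1 := by
      rw [← Finset.sum_div, div_eq_one_iff_eq hm0.ne']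
      exact_mod_cast hs α hα
    refine le_trans (le_of_eq ?_) (Real.geom_mean_le_arith_mean_weighted Finset.univ
      (fun k => (α k / m : ℝ)) (fun k => (w k)⁻¹) (fun _ _ => by positivity) hsum
      (fun k _ => inv_nonneg.2 (hw0 k)))
    simp only [hWdef]
    rw [← Real.finsetProd_rpow _ _ (fun i _ => pow_nonneg (hw0 i) _)]
    refine Finset.prod_congr rfl fun i _ => ?_
    rw [← Real.rpow_natCast, ← Real.rpow_mul (hw0 i), Real.inv_rpow (hw0 i),
      ← Real.rpow_neg (hw0 i)]
    congr 1; ring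
  have hT : ∑ α ∈ s, c α ^ 2 * W α ^ (-(1 / m : ℝ)) ≤ S ^ 2 := by
    calc ∑ α ∈ s, c α ^ 2 * W α ^ (-(1 / m : ℝ))
        ≤ ∑ α ∈ s, c α ^ 2 * ∑ k, (α k / m : ℝ) * (w k)⁻¹ :=
          Finset.sum_le_sum fun α hα => mul_le_mul_of_nonneg_left (hAM α hα) (sq_nonneg _)
      _ = ∑ k, (1 / m : ℝ) * (w k)⁻¹ * ∑ α ∈ s, (α k : ℝ) * c α ^ 2 := by
          simp only [Finset.mul_sum]
          rw [Finset.sum_comm]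
          refine Finset.sum_congr rfl fun k _ => Finset.sum_congr rfl fun α _ => by ring
      _ ≤ ∑ k, (1 / m : ℝ) * (w k)⁻¹ * σ k ^ 2 := by
          refine Finset.sum_le_sum fun k _ => mul_le_mul_of_nonneg_left (hσ k) ?_
          have := hw0 k
          positivity
      _ ≤ ∑ k, S * σ k := by
          refine Finset.sum_le_sum fun k _ => ?_
          have h1 : (w k)⁻¹ * σ k ^ 2 = S * σ k := by
            simp only [hw]
            by_cases h : σ k = 0
            · simp [h]
            · field_simp
          rw [mul_assoc, h1]
          refine mul_le_of_le_one_left (mul_nonneg hS0 (hσ0 k)) ?_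
          rw [div_le_one hm0]; exact_mod_cast hm
      _ = S ^ 2 := by rw [← Finset.mul_sum, ← hS]; ring
  have hpt : ∀ α ∈ s, c α ^ p ≤ S ^ p * ((m / (m + 1) : ℝ) *
      (c α ^ 2 * W α ^ (-(1 / m : ℝ)) / S ^ 2) + (1 / (m + 1) : ℝ) * W α) := by
    intro α hα
    have hcα := hc α hα
    have hWα := hW α hα
    have hy := Real.geom_mean_le_arith_mean2_weighted (w₁ := (m / (m + 1) : ℝ))
      (w₂ := (1 / (m + 1) : ℝ)) (p₁ := c α ^ 2 * W α ^ (-(1 / m : ℝ)) / S ^ 2) (p₂ := W α)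
      (by positivity) (by positivity) (by positivity) hWα.le (by field_simp)
    refine le_trans (le_of_eq ?_) (mul_le_mul_of_nonneg_left hy (by positivity))
    rw [Real.div_rpow (by positivity) (by positivity), Real.mul_rpow (by positivity) (by positivity),
      ← Real.rpow_natCast, ← Real.rpow_mul hcα.le, ← Real.rpow_mul hWα.le, ← Real.rpow_natCast S,
      ← Real.rpow_mul hSpos.le]
    have e1 : ((2 : ℕ) : ℝ) * (m / (m + 1)) = p := by rw [hp]; push_cast; ring
    have e2 : W α ^ (-(1 / m : ℝ) * (m / (m + 1))) * W α ^ (1 / (m + 1) : ℝ) = 1 := by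
      rw [← Real.rpow_add hWα]
      have : -(1 / m : ℝ) * (m / (m + 1)) + 1 / (m + 1) = 0 := by field_simp; ring
      rw [this, Real.rpow_zero]
    rw [e1]
    have : 0 < S ^ p := by positivity
    have e3 : S ^ p * (c α ^ p * W α ^ (-(1 / m : ℝ) * (m / (m + 1))) / S ^ p *
        W α ^ (1 / (m + 1) : ℝ)) = c α ^ p * (W α ^ (-(1 / m : ℝ) * (m / (m + 1))) *
        W α ^ (1 / (m + 1) : ℝ)) := by field_simp
    rw [e3, e2, mul_one]
  refine (Finset.sum_le_sum hpt).trans ?_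
  rw [← Finset.mul_sum, Finset.sum_add_distrib, ← Finset.mul_sum, ← Finset.mul_sum,
    ← Finset.sum_div]
  refine mul_le_of_le_one_right (by positivity) ?_
  have h1 : (∑ α ∈ s, c α ^ 2 * W α ^ (-(1 / m : ℝ))) / S ^ 2 ≤ 1 :=
    div_le_one_of_le₀ hT (by positivity)
  have h2 := blei_aux n m s hs w hw0 hw1
  calc _ ≤ (m / (m + 1) : ℝ) * 1 + (1 / (m + 1) : ℝ) * 1 := by gcongr
    _ = 1 := by field_simp

noncomputable def cpoly {n : ℕ} (s : Finset (Fin n →₀ ℕ)) (c : (Fin n →₀ ℕ) → ℂ)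
    (z : Fin n → ℂ) : ℂ := ∑ α ∈ s, c α * ∏ i, z i ^ α i

theorem orth1 (N : ℕ) (ζ : ℂ) (hζ : IsPrimitiveRoot ζ N) (hN : 0 < N) (a b : ℕ) (ha : a < N)
    (hb : b < N) :
    ∑ k : Fin N, (ζ ^ (k : ℕ)) ^ a * (starRingEnd ℂ) ((ζ ^ (k : ℕ)) ^ b)
      = if a = b then (N : ℂ) else 0 := by
  have hnorm : ‖ζ‖ = 1 := hζ.norm'_eq_one hN.ne'
  have hζ0 : ζ ≠ 0 := by rintro rfl; simp at hnorm
  have hconj : (starRingEnd ℂ) ζ = ζ⁻¹ := (Complex.inv_eq_conj hnorm).symm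
  have h1 : ∀ k : Fin N, (ζ ^ (k : ℕ)) ^ a * (starRingEnd ℂ) ((ζ ^ (k : ℕ)) ^ b)
      = (ζ ^ a * (ζ ^ b)⁻¹) ^ (k : ℕ) := by
    intro k
    rw [map_pow, map_pow, hconj, mul_pow, inv_pow, inv_pow, inv_pow, ← pow_mul, ← pow_mul, ← pow_mul,
      ← pow_mul, mul_comm (k : ℕ) a, mul_comm (k : ℕ) b]
  simp_rw [h1]
  rw [Fin.sum_univ_eq_sum_range (fun k => (ζ ^ a * (ζ ^ b)⁻¹) ^ k)]
  split_ifs with h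
  · subst h
    rw [mul_inv_cancel₀ (pow_ne_zero _ hζ0)]
    simp
  · have hne : ζ ^ a * (ζ ^ b)⁻¹ ≠ 1 := by
      intro h2
      apply h
      apply hζ.pow_inj ha hb
      field_simp at h2
      exact h2
    have h3 := mul_geom_sum (ζ ^ a * (ζ ^ b)⁻¹) N
    have h4 : (ζ ^ a * (ζ ^ b)⁻¹) ^ N = 1 := by
      rw [mul_pow, inv_pow, ← pow_mul, ← pow_mul, mul_comm a, mul_comm b, pow_mul, pow_mul,
        hζ.pow_eq_one]
      simp
    rw [h4, sub_self] at h3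
    exact (mul_eq_zero.1 h3).resolve_left (sub_ne_zero.2 hne)

theorem parseval {n : ℕ} (N : ℕ) (ζ : ℂ) (hζ : IsPrimitiveRoot ζ N) (hN : 0 < N)
    (s : Finset (Fin n →₀ ℕ)) (c : (Fin n →₀ ℕ) → ℂ) (hs : ∀ α ∈ s, ∀ i, α i < N) :
    ∑ g : Fin n → Fin N, ‖cpoly s c (fun i => ζ ^ (g i : ℕ))‖ ^ 2
      = (N : ℝ) ^ n * ∑ α ∈ s, ‖c α‖ ^ 2 := by
  have key : ∑ g : Fin n → Fin N, cpoly s c (fun i => ζ ^ (g i : ℕ)) *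
      (starRingEnd ℂ) (cpoly s c (fun i => ζ ^ (g i : ℕ)))
      = (N : ℂ) ^ n * ∑ α ∈ s, c α * (starRingEnd ℂ) (c α) := by
    simp only [cpoly, map_sum, Finset.sum_mul_sum, map_mul, map_prod]
    rw [Finset.sum_comm, Finset.mul_sum]
    refine Finset.sum_congr rfl fun α hα => ?_
    rw [Finset.sum_comm]
    rw [Finset.sum_eq_single α]
    · have : ∀ g : Fin n → Fin N, (c α * ∏ i, (ζ ^ (g i : ℕ)) ^ α i) *
          ((starRingEnd ℂ) (c α) * ∏ i, (starRingEnd ℂ) ((ζ ^ (g i : ℕ)) ^ α i)) =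
          c α * (starRingEnd ℂ) (c α) * ∏ i, ((ζ ^ (g i : ℕ)) ^ α i *
            (starRingEnd ℂ) ((ζ ^ (g i : ℕ)) ^ α i)) := by
        intro g; rw [Finset.prod_mul_distrib]; ring
      simp_rw [this]
      rw [← Finset.mul_sum, ← Fintype.prod_sum (fun i (k : Fin N) => (ζ ^ (k : ℕ)) ^ α i *
            (starRingEnd ℂ) ((ζ ^ (k : ℕ)) ^ α i))]
      rw [Finset.prod_congr rfl fun i _ => orth1 N ζ hζ hN _ _ (hs α hα i) (hs α hα i)]
      simp
      ring
    · intro β hβ hne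
      have : ∀ g : Fin n → Fin N, (c α * ∏ i, (ζ ^ (g i : ℕ)) ^ α i) *
          ((starRingEnd ℂ) (c β) * ∏ i, (starRingEnd ℂ) ((ζ ^ (g i : ℕ)) ^ β i)) =
          c α * (starRingEnd ℂ) (c β) * ∏ i, ((ζ ^ (g i : ℕ)) ^ α i *
            (starRingEnd ℂ) ((ζ ^ (g i : ℕ)) ^ β i)) := by
        intro g; rw [Finset.prod_mul_distrib]; ring
      simp_rw [this]
      rw [← Finset.mul_sum, ← Fintype.prod_sum (fun i (k : Fin N) => (ζ ^ (k : ℕ)) ^ α i *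
            (starRingEnd ℂ) ((ζ ^ (k : ℕ)) ^ β i))]
      rw [Finset.prod_congr rfl fun i _ => orth1 N ζ hζ hN _ _ (hs α hα i) (hs β hβ i)]
      obtain ⟨i, hi⟩ : ∃ i, α i ≠ β i := by
        by_contra! h
        exact hne (Finsupp.ext h).symm
      rw [Finset.prod_eq_zero (Finset.mem_univ i) (by simp [hi]), mul_zero]
    · intro h; exact absurd hα h
  simp only [Complex.mul_conj'] at key
  exact_mod_cast key

theorem fiber_card {n : ℕ} (m : ℕ) (s : Finset (Fin n →₀ ℕ)) (hs : ∀ α ∈ s, ∑ i, α i = m)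
    (γ : Fin n →₀ ℕ) :
    ((s ×ˢ s).filter (fun x => x.1 + x.2 = γ)).card ≤ 4 ^ m := by
  rcases ((s ×ˢ s).filter (fun x => x.1 + x.2 = γ)).eq_empty_or_nonempty with h | ⟨x, hx⟩
  · rw [h]; simp
  simp only [Finset.mem_filter, Finset.mem_product] at hx
  have hγ : ∑ i, γ i = 2 * m := by
    rw [← hx.2]
    simp only [Finsupp.add_apply, Finset.sum_add_distrib]
    rw [hs _ hx.1.1, hs _ hx.1.2]; ring
  have h1 : ((s ×ˢ s).filter (fun x => x.1 + x.2 = γ)).card ≤ (Finset.Iic γ).card := by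
    refine Finset.card_le_card_of_injOn (fun x => x.1) ?_ ?_
    · intro y hy
      simp only [Finset.coe_filter, Set.mem_ofPred_eq] at hy
      simp only [Finset.coe_Iic, Set.mem_Iic]
      rw [← hy.2]; exact le_self_add
    · intro y hy y' hy' h
      simp only [Finset.coe_filter, Set.mem_ofPred_eq] at hy hy'
      dsimp only at h
      refine Prod.ext h ?_
      have := hy.2.trans hy'.2.symm
      rw [h] at this
      exact add_left_cancel this
  refine h1.trans ?_
  rw [Finsupp.card_Iic]
  calc ∏ i ∈ γ.support, (Finset.Iic (γ i)).card ≤ ∏ i ∈ γ.support, 2 ^ γ i := by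
        refine Finset.prod_le_prod' fun i _ => ?_
        rw [Nat.card_Iic]
        exact Nat.lt_two_pow_self
    _ = 2 ^ ∑ i ∈ γ.support, γ i := Finset.prod_pow_eq_pow_sum _ _ _
    _ ≤ 2 ^ (2 * m) := by
        refine Nat.pow_le_pow_right (by norm_num) ?_
        rw [← hγ]
        exact Finset.sum_le_sum_of_subset (Finset.subset_univ _)
    _ = 4 ^ m := by rw [pow_mul]; norm_num

theorem fourth {n : ℕ} (m N : ℕ) (ζ : ℂ) (hζ : IsPrimitiveRoot ζ N) (hN : 2 * m < N)
    (s : Finset (Fin n →₀ ℕ)) (c : (Fin n →₀ ℕ) → ℂ) (hs : ∀ α ∈ s, ∑ i, α i = m) :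
    ∑ g : Fin n → Fin N, ‖cpoly s c (fun i => ζ ^ (g i : ℕ))‖ ^ 4
      ≤ (N : ℝ) ^ n * (4 ^ m * (∑ α ∈ s, ‖c α‖ ^ 2) ^ 2) := by
  have hle : ∀ α ∈ s, ∀ i, α i ≤ m := by
    intro α hα i
    rw [← hs α hα]
    exact Finset.single_le_sum (f := fun i => α i) (fun _ _ => Nat.zero_le _) (Finset.mem_univ i)
  classical
  set t := (s ×ˢ s).image (fun x => x.1 + x.2) with ht
  set d : (Fin n →₀ ℕ) → ℂ := fun γ =>
    ∑ x ∈ (s ×ˢ s).filter (fun x => x.1 + x.2 = γ), c x.1 * c x.2 with hd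
  have hsq : ∀ z : Fin n → ℂ, cpoly s c z ^ 2 = cpoly t d z := by
    intro z
    simp only [cpoly, sq, Finset.sum_mul_sum]
    simp only [hd, Finset.sum_mul]
    rw [← Finset.sum_product', ← Finset.sum_fiberwise_of_maps_to (t := t)
      (g := fun x : (Fin n →₀ ℕ) × (Fin n →₀ ℕ) => x.1 + x.2)
      (fun x hx => Finset.mem_image_of_mem _ hx)]
    refine Finset.sum_congr rfl fun γ _ => Finset.sum_congr rfl fun x hx => ?_
    rw [← (Finset.mem_filter.1 hx).2]
    simp only [Finsupp.add_apply, pow_add, Finset.prod_mul_distrib]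
    ring
  have h1 : ∀ g : Fin n → Fin N, ‖cpoly s c (fun i => ζ ^ (g i : ℕ))‖ ^ 4 =
      ‖cpoly t d (fun i => ζ ^ (g i : ℕ))‖ ^ 2 := by
    intro g; rw [← hsq, norm_pow]; ring
  simp_rw [h1]
  rw [parseval N ζ hζ (by omega) t d]
  · gcongr
    calc ∑ γ ∈ t, ‖d γ‖ ^ 2
        ≤ ∑ γ ∈ t, 4 ^ m * ∑ x ∈ (s ×ˢ s).filter (fun x => x.1 + x.2 = γ),
            ‖c x.1‖ ^ 2 * ‖c x.2‖ ^ 2 := by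
          refine Finset.sum_le_sum fun γ _ => ?_
          calc ‖d γ‖ ^ 2 ≤ (∑ x ∈ (s ×ˢ s).filter (fun x => x.1 + x.2 = γ),
                ‖c x.1 * c x.2‖) ^ 2 := by gcongr; exact norm_sum_le _ _
            _ ≤ _ := sq_sum_le_card_mul_sum_sq
            _ ≤ _ := by
              simp only [norm_mul, mul_pow]
              refine mul_le_mul_of_nonneg_right ?_ (Finset.sum_nonneg fun _ _ => by positivity)
              exact_mod_cast fiber_card m s hs γ
      _ = _ := by
          rw [← Finset.mul_sum, Finset.sum_fiberwise_of_maps_to (t := t)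
            (g := fun x : (Fin n →₀ ℕ) × (Fin n →₀ ℕ) => x.1 + x.2)
            (fun x hx => Finset.mem_image_of_mem _ hx), sq, Finset.sum_mul_sum,
            ← Finset.sum_product']
  · intro γ hγ i
    obtain ⟨x, hx, rfl⟩ := Finset.mem_image.1 hγ
    rw [Finset.mem_product] at hx
    have := hle _ hx.1 i
    have := hle _ hx.2 i
    simp only [Finsupp.add_apply]
    omega

theorem holder_aux {ι : Type*} (s : Finset ι) (f : ι → ℝ) (hf : ∀ i ∈ s, 0 ≤ f i) :
    (∑ i ∈ s, f i ^ 2) ^ 3 ≤ (∑ i ∈ s, f i) ^ 2 * ∑ i ∈ s, f i ^ 4 := by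
  have h1 : (∑ i ∈ s, f i ^ 2) ^ 2 ≤ (∑ i ∈ s, f i) * ∑ i ∈ s, f i ^ 3 :=
    Finset.sum_sq_le_sum_mul_sum_of_sq_le_mul s hf (fun i hi => pow_nonneg (hf i hi) 3)
      (fun i _ => le_of_eq (by ring))
  have h2 : (∑ i ∈ s, f i ^ 3) ^ 2 ≤ (∑ i ∈ s, f i ^ 2) * ∑ i ∈ s, f i ^ 4 :=
    Finset.sum_sq_le_sum_mul_sum_of_sq_le_mul s (fun i hi => pow_nonneg (hf i hi) 2)
      (fun i hi => pow_nonneg (hf i hi) 4) (fun i _ => le_of_eq (by ring))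
  have hA : 0 ≤ ∑ i ∈ s, f i ^ 2 := Finset.sum_nonneg fun i hi => pow_nonneg (hf i hi) 2
  have hB : 0 ≤ ∑ i ∈ s, f i := Finset.sum_nonneg hf
  have hD : 0 ≤ ∑ i ∈ s, f i ^ 4 := Finset.sum_nonneg fun i hi => pow_nonneg (hf i hi) 4
  rcases hA.eq_or_lt with h0 | h0
  · rw [← h0]; simpa using mul_nonneg (sq_nonneg _) hD
  · refine le_of_mul_le_mul_left ?_ h0
    calc (∑ i ∈ s, f i ^ 2) * (∑ i ∈ s, f i ^ 2) ^ 3 = ((∑ i ∈ s, f i ^ 2) ^ 2) ^ 2 := by ring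
      _ ≤ ((∑ i ∈ s, f i) * ∑ i ∈ s, f i ^ 3) ^ 2 := by gcongr
      _ = (∑ i ∈ s, f i) ^ 2 * (∑ i ∈ s, f i ^ 3) ^ 2 := by ring
      _ ≤ (∑ i ∈ s, f i) ^ 2 * ((∑ i ∈ s, f i ^ 2) * ∑ i ∈ s, f i ^ 4) := by gcongr
      _ = _ := by ring

theorem hyper {n : ℕ} (m N : ℕ) (ζ : ℂ) (hζ : IsPrimitiveRoot ζ N) (hN : 2 * m < N)
    (s : Finset (Fin n →₀ ℕ)) (c : (Fin n →₀ ℕ) → ℂ) (hs : ∀ α ∈ s, ∑ i, α i = m) :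
    (N : ℝ) ^ n * √(∑ α ∈ s, ‖c α‖ ^ 2) ≤
      2 ^ m * ∑ g : Fin n → Fin N, ‖cpoly s c (fun i => ζ ^ (g i : ℕ))‖ := by
  have hle : ∀ α ∈ s, ∀ i, α i < N := by
    intro α hα i
    have : α i ≤ m := by
      rw [← hs α hα]
      exact Finset.single_le_sum (f := fun i => α i) (fun _ _ => Nat.zero_le _) (Finset.mem_univ i)
    omega
  have h2 := parseval N ζ hζ (by omega) s c hle
  have h4 := fourth m N ζ hζ hN s c hs
  have hh := holder_aux Finset.univ
    (fun g : Fin n → Fin N => ‖cpoly s c (fun i => ζ ^ (g i : ℕ))‖) (fun _ _ => norm_nonneg _)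
  rw [h2] at hh
  set A := ∑ g : Fin n → Fin N, ‖cpoly s c (fun i => ζ ^ (g i : ℕ))‖ with hA
  have hA0 : 0 ≤ A := Finset.sum_nonneg fun _ _ => norm_nonneg _
  set L := ∑ α ∈ s, ‖c α‖ ^ 2 with hL
  have hL0 : 0 ≤ L := Finset.sum_nonneg fun _ _ => by positivity
  have hNp : (0 : ℝ) < (N : ℝ) ^ n := by
    have : 0 < N := by omega
    positivity
  rcases hL0.eq_or_lt with h0 | h0
  · rw [← h0]; simp; positivity
  have h5 : ((N : ℝ) ^ n * L) ^ 3 ≤ A ^ 2 * ((N : ℝ) ^ n * (4 ^ m * L ^ 2)) :=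
    hh.trans (by gcongr)
  have h6 : ((N : ℝ) ^ n) ^ 2 * L ≤ (2 ^ m * A) ^ 2 := by
    refine le_of_mul_le_mul_left ?_ (show 0 < (N : ℝ) ^ n * L ^ 2 by positivity)
    have e : (4 : ℝ) ^ m = (2 ^ m) ^ 2 := by rw [← pow_mul, mul_comm, pow_mul]; norm_num
    rw [e] at h5
    calc _ = ((N : ℝ) ^ n * L) ^ 3 := by ring
      _ ≤ _ := h5
      _ = _ := by ring
  refine le_of_sq_le_sq ?_ (by positivity)
  rw [mul_pow, Real.sq_sqrt hL0]
  exact h6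

theorem cpoly_smul {n : ℕ} (m : ℕ) (s : Finset (Fin n →₀ ℕ)) (c : (Fin n →₀ ℕ) → ℂ)
    (hs : ∀ α ∈ s, ∑ i, α i = m) (l : ℂ) (z : Fin n → ℂ) :
    cpoly s c (fun i => l * z i) = l ^ m * cpoly s c z := by
  simp only [cpoly, Finset.mul_sum]
  refine Finset.sum_congr rfl fun α hα => ?_
  simp only [mul_pow, Finset.prod_mul_distrib]
  rw [Finset.prod_pow_eq_pow_sum, hs α hα]
  ring

theorem cpoly_bound {n : ℕ} (m : ℕ) (s : Finset (Fin n →₀ ℕ)) (c : (Fin n →₀ ℕ) → ℂ)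
    (hs : ∀ α ∈ s, ∑ i, α i = m) (M : ℝ)
    (hM : ∀ x : Fin n → ℝ, (∀ i, |x i| ≤ 1) → ‖cpoly s c (fun i => (x i : ℂ))‖ ≤ M)
    (z : Fin n → ℂ) (hz : ∀ i, ‖z i‖ ≤ 2) : ‖cpoly s c z‖ ≤ 4 ^ m * M := by
  set q : ℂ → ℂ := fun t => cpoly s c (fun i => z i + t * (starRingEnd ℂ) (z i)) with hq
  have hd : Differentiable ℂ q := by
    simp only [hq, cpoly]
    fun_prop
  have hfr : ∀ t ∈ frontier (Metric.ball (0 : ℂ) 1), ‖q t‖ ≤ 4 ^ m * M := by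
    intro t ht
    rw [frontier_ball _ one_ne_zero, mem_sphere_zero_iff_norm] at ht
    obtain ⟨v, hv⟩ : ∃ v : ℂ, v ^ 2 = t := IsSquare.exists_sq t (IsAlgClosed.exists_pow_nat_eq t (n := 2) (by norm_num) |>.elim fun v hv => ⟨v, by rw [← hv, sq]⟩) |>.elim fun v hv => ⟨v, hv.symm⟩
    have hv1 : ‖v‖ = 1 := by
      have : ‖v‖ ^ 2 = 1 := by rw [← norm_pow, hv, ht]
      exact (pow_eq_one_iff_of_nonneg (norm_nonneg v) two_ne_zero).1 this
    have hvv : v * (starRingEnd ℂ) v = 1 := by rw [Complex.mul_conj', hv1]; simp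
    have e : (fun i => z i + t * (starRingEnd ℂ) (z i)) =
        fun i => (4 * v) * (((((starRingEnd ℂ) v * z i).re / 2 : ℝ)) : ℂ) := by
      funext i
      have h1 : ((((starRingEnd ℂ) v * z i).re : ℝ) : ℂ) =
          ((starRingEnd ℂ) v * z i + v * (starRingEnd ℂ) (z i)) / 2 := by
        rw [Complex.re_eq_add_conj]; simp
      push_cast
      rw [h1, ← hv]
      linear_combination (-z i) * hvv
    simp only [hq]
    rw [e, cpoly_smul m s c hs, norm_mul, norm_pow, norm_mul, hv1]
    have : ‖(4 : ℂ)‖ = 4 := by norm_num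
    rw [this, mul_one]
    refine mul_le_mul_of_nonneg_left (hM _ fun i => ?_) (by positivity)
    rw [abs_div, abs_two, div_le_one (by norm_num)]
    refine (Complex.abs_re_le_norm _).trans ?_
    rw [norm_mul, Complex.norm_conj, hv1, one_mul]
    exact hz i
  have h := Complex.norm_le_of_forall_mem_frontier_norm_le (Metric.isBounded_ball)
    hd.diffContOnCl hfr (subset_closure (Metric.mem_ball_self one_pos))
  simpa [hq] using h

theorem cpoly_deriv {n : ℕ} (s : Finset (Fin n →₀ ℕ)) (c : (Fin n →₀ ℕ) → ℂ)
    (z ε : Fin n → ℂ) :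
    HasDerivAt (fun t : ℂ => cpoly s c (fun i => z i * (1 + t * ε i)))
      (∑ k, ε k * cpoly s (fun α => (α k : ℂ) * c α) z) 0 := by
  have h1 : ∀ α : Fin n →₀ ℕ, HasDerivAt (fun t : ℂ => ∏ i, (1 + t * ε i) ^ α i)
      (∑ k, (α k : ℂ) * ε k) 0 := by
    intro α
    have h2 : ∀ i ∈ (Finset.univ : Finset (Fin n)),
        HasDerivAt (fun t : ℂ => (1 + t * ε i) ^ α i) ((α i : ℂ) * ε i) 0 := by
      intro i _
      have h3 : HasDerivAt (fun t : ℂ => 1 + t * ε i) (ε i) 0 := by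
        simpa using ((hasDerivAt_id (0 : ℂ)).mul_const (ε i)).const_add 1
      simpa using h3.fun_pow (α i)
    have h4 := HasDerivAt.fun_finsetProd h2
    simpa using h4
  have h5 : HasDerivAt (fun t : ℂ => ∑ α ∈ s, (c α * ∏ i, z i ^ α i) * ∏ i, (1 + t * ε i) ^ α i)
      (∑ α ∈ s, (c α * ∏ i, z i ^ α i) * ∑ k, (α k : ℂ) * ε k) 0 :=
    HasDerivAt.fun_sum fun α _ => (h1 α).const_mul _
  convert h5 using 1
  · funext t
    simp only [cpoly, mul_pow, Finset.prod_mul_distrib, mul_assoc]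
  · simp only [cpoly, Finset.mul_sum]
    rw [Finset.sum_comm]
    refine Finset.sum_congr rfl fun α _ => Finset.sum_congr rfl fun k _ => by ring

theorem cpoly_deriv_bound {n : ℕ} (m : ℕ) (s : Finset (Fin n →₀ ℕ)) (c : (Fin n →₀ ℕ) → ℂ)
    (hs : ∀ α ∈ s, ∑ i, α i = m) (M : ℝ)
    (hM : ∀ x : Fin n → ℝ, (∀ i, |x i| ≤ 1) → ‖cpoly s c (fun i => (x i : ℂ))‖ ≤ M)
    (z : Fin n → ℂ) (hz : ∀ i, ‖z i‖ ≤ 1) :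
    ∑ k, ‖cpoly s (fun α => (α k : ℂ) * c α) z‖ ≤ 4 ^ m * M := by
  have hε : ∀ a : ℂ, ∃ e : ℂ, ‖e‖ ≤ 1 ∧ e * a = (‖a‖ : ℂ) := by
    intro a
    by_cases ha : a = 0
    · exact ⟨0, by simp, by simp [ha]⟩
    · refine ⟨‖a‖ / a, ?_, by field_simp⟩
      rw [norm_div, Complex.norm_real, norm_norm, div_self (norm_ne_zero_iff.2 ha)]
  choose e he1 he2 using hε
  set ε : Fin n → ℂ := fun k => e (cpoly s (fun α => (α k : ℂ) * c α) z) with hεd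
  have hd := cpoly_deriv s c z ε
  have hdiff : Differentiable ℂ (fun t : ℂ => cpoly s c (fun i => z i * (1 + t * ε i))) := by
    simp only [cpoly]
    fun_prop
  have hb := Complex.norm_deriv_le_of_forall_mem_sphere_norm_le (c := 0) (R := 1)
    (C := 4 ^ m * M) one_pos hdiff.diffContOnCl (fun t ht => by
      rw [mem_sphere_zero_iff_norm] at ht
      refine cpoly_bound m s c hs M hM _ fun i => ?_
      rw [norm_mul]
      have h1 : ‖1 + t * ε i‖ ≤ 2 := by
        refine (norm_add_le _ _).trans ?_
        rw [norm_mul, ht, norm_one]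
        have := he1 (cpoly s (fun α => (α i : ℂ) * c α) z)
        simp only [hεd]
        linarith
      nlinarith [hz i, norm_nonneg (z i), norm_nonneg (1 + t * ε i)])
  rw [hd.deriv, div_one] at hb
  simp only [hεd, he2] at hb
  rw [← Complex.ofReal_sum, Complex.norm_real, Real.norm_of_nonneg
    (Finset.sum_nonneg fun _ _ => norm_nonneg _)] at hb
  exact hb

theorem bh_upper (m n : ℕ) (hm : 1 ≤ m) (P : MvPolynomial (Fin n) ℝ) (hP : P.IsHomogeneous m) :
    lpNorm (2 * m / (m + 1)) P ≤ 8 ^ m * supNorm P := by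
  have hs : ∀ α ∈ P.support, ∑ i, α i = m := by
    intro α hα
    have h1 := hP (mem_support_iff.1 hα)
    rw [← h1, Finsupp.weight_apply, Finsupp.sum_fintype _ _ (by simp)]
    simp
  set c : (Fin n →₀ ℕ) → ℂ := fun α => ((coeff α P : ℝ) : ℂ) with hcdef
  have hM : ∀ x : Fin n → ℝ, (∀ i, |x i| ≤ 1) →
      ‖cpoly P.support c (fun i => (x i : ℂ))‖ ≤ supNorm P := by
    intro x hx
    have e : cpoly P.support c (fun i => (x i : ℂ)) = ((eval x P : ℝ) : ℂ) := by
      rw [eval_eq', cpoly]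
      push_cast
      rfl
    rw [e, Complex.norm_real, Real.norm_eq_abs]
    exact abs_eval_le_supNorm P x hx
  have hζ := Complex.isPrimitiveRoot_exp (2 * m + 1) (by omega)
  set N := 2 * m + 1 with hN
  set ζ : ℂ := Complex.exp (2 * Real.pi * Complex.I / N) with hζdef
  have hζ1 : ‖ζ‖ = 1 := hζ.norm'_eq_one (by omega)
  set σ : Fin n → ℝ := fun k => √(∑ α ∈ P.support, ‖(α k : ℂ) * c α‖ ^ 2) with hσdef
  have hsum : ∑ k, σ k ≤ 8 ^ m * supNorm P := by
    have hNpos : (0 : ℝ) < (N : ℝ) ^ n := by positivity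
    have h1 : (N : ℝ) ^ n * ∑ k, σ k ≤ (N : ℝ) ^ n * (8 ^ m * supNorm P) := by
      calc (N : ℝ) ^ n * ∑ k, σ k = ∑ k, (N : ℝ) ^ n * σ k := Finset.mul_sum _ _ _
        _ ≤ ∑ k, 2 ^ m * ∑ g : Fin n → Fin N,
            ‖cpoly P.support (fun α => (α k : ℂ) * c α) (fun i => ζ ^ (g i : ℕ))‖ :=
          Finset.sum_le_sum fun k _ => hyper m N ζ hζ (by omega) P.support _ hs
        _ = 2 ^ m * ∑ g : Fin n → Fin N, ∑ k,
            ‖cpoly P.support (fun α => (α k : ℂ) * c α) (fun i => ζ ^ (g i : ℕ))‖ := by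
          rw [← Finset.mul_sum, Finset.sum_comm]
        _ ≤ 2 ^ m * ∑ g : Fin n → Fin N, 4 ^ m * supNorm P := by
          gcongr with g
          exact cpoly_deriv_bound m P.support c hs _ hM _ (fun i => by
            rw [norm_pow, hζ1, one_pow])
        _ = (N : ℝ) ^ n * (8 ^ m * supNorm P) := by
          have : (8 : ℝ) ^ m = 2 ^ m * 4 ^ m := by rw [← mul_pow]; norm_num
          rw [Finset.sum_const, Finset.card_univ, Fintype.card_fun, Fintype.card_fin,
            Fintype.card_fin, nsmul_eq_mul, this]
          push_cast
          ring
    exact le_of_mul_le_mul_left h1 hNpos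
  have hσ0 : ∀ k, 0 ≤ σ k := fun k => Real.sqrt_nonneg _
  have hb := blei n m hm P.support hs (fun α => |coeff α P|)
    (fun α hα => abs_pos.2 (mem_support_iff.1 hα)) σ hσ0 (by
      intro k
      rw [hσdef]
      simp only
      rw [Real.sq_sqrt (Finset.sum_nonneg fun _ _ => by positivity)]
      refine Finset.sum_le_sum fun α _ => ?_
      rw [norm_mul, mul_pow, hcdef]
      simp only [Complex.norm_natCast, Complex.norm_real, Real.norm_eq_abs]
      gcongr
      have : α k ≤ α k ^ 2 := Nat.le_self_pow two_ne_zero _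
      exact_mod_cast this)
  have hm0 : (0 : ℝ) < m := by exact_mod_cast hm
  have hp : (0 : ℝ) < 2 * m / (m + 1) := by positivity
  refine le_trans ?_ hsum
  unfold lpNorm
  calc _ ≤ ((∑ k, σ k) ^ (2 * m / (m + 1) : ℝ)) ^ (1 / (2 * m / (m + 1)) : ℝ) :=
        Real.rpow_le_rpow (Finset.sum_nonneg fun _ _ => by positivity) hb (by positivity)
    _ = _ := by
      rw [← Real.rpow_mul (Finset.sum_nonneg fun k _ => hσ0 k), mul_one_div_cancel hp.ne',
        Real.rpow_one]

theorem BHconst_nonneg (m : ℕ) : 0 ≤ BHconst m :=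
  Real.sInf_nonneg fun _ h => h.1.le

theorem BHconst_le (m : ℕ) (hm : 1 ≤ m) : BHconst m ≤ 8 ^ m :=
  csInf_le ⟨0, fun _ h => h.1.le⟩ ⟨by positivity, fun n P hP => bh_upper m n hm P hP⟩

theorem le_BHconst (n : ℕ) (hn : 2 ≤ n) :
    2 ^ (n.choose 2) / (n.factorial * 2 ^ n) ≤ BHconst (n.choose 2) := by
  have hm : 1 ≤ n.choose 2 := Nat.choose_pos hn
  refine le_csInf ⟨8 ^ (n.choose 2), by positivity, fun k P hP => bh_upper _ k hm P hP⟩ ?_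
  rintro D ⟨hD, h⟩
  exact vand_lower n hn D hD (h n (vandP n) (vandP_hom n))

theorem tendsto_choose_two : Tendsto (fun n : ℕ => n.choose 2) atTop atTop := by
  refine tendsto_atTop_mono' _ ?_ (tendsto_sub_atTop_nat 1)
  filter_upwards [eventually_ge_atTop 2] with n hn
  rw [Nat.choose_two_right, Nat.le_div_iff_mul_le two_pos, mul_comm]
  exact Nat.mul_le_mul_right _ hn

theorem growth (a : ℝ) (ha : 0 < a) (ha2 : a < 2) :
    ∀ᶠ n : ℕ in atTop, a ^ (n.choose 2) ≤ 2 ^ (n.choose 2) / (n.factorial * 2 ^ n) := by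
  set b : ℝ := 2 / a with hb
  have hb1 : 1 < b := by rw [hb, lt_div_iff₀ ha]; linarith
  set r : ℝ := √b with hr
  have hr1 : 1 < r := by rw [hr, Real.lt_sqrt zero_le_one]; simpa using hb1
  have hr2 : r ^ 2 = b := Real.sq_sqrt (by linarith)
  have ht : Tendsto (fun n : ℕ => (n : ℝ) ^ 1 / r ^ n) atTop (nhds 0) :=
    tendsto_pow_const_div_const_pow_of_one_lt 1 hr1
  have hev : ∀ᶠ n : ℕ in atTop, (n : ℝ) ^ 1 / r ^ n < 1 / (2 * r) :=
    ht.eventually_lt_const (by positivity)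
  filter_upwards [hev, eventually_ge_atTop 2] with n h1 hn
  have hr0 : 0 < r := by linarith
  rw [pow_one, div_lt_div_iff₀ (by positivity) (by positivity), one_mul] at h1
  obtain ⟨k, rfl⟩ : ∃ k, n = k + 1 := ⟨n - 1, by omega⟩
  have h2 : 2 * ((k + 1 : ℕ) : ℝ) ≤ r ^ k := by
    rw [pow_succ] at h1
    nlinarith
  have h3 : ((k + 1 : ℕ).factorial : ℝ) * 2 ^ (k + 1) ≤ b ^ ((k + 1).choose 2) := by
    have hf : ((k + 1 : ℕ).factorial : ℝ) ≤ ((k + 1 : ℕ) : ℝ) ^ (k + 1) := by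
      exact_mod_cast Nat.factorial_le_pow (k + 1)
    calc ((k + 1 : ℕ).factorial : ℝ) * 2 ^ (k + 1)
        ≤ ((k + 1 : ℕ) : ℝ) ^ (k + 1) * 2 ^ (k + 1) := by gcongr
      _ = (2 * ((k + 1 : ℕ) : ℝ)) ^ (k + 1) := by rw [mul_pow, mul_comm]
      _ ≤ (r ^ k) ^ (k + 1) := by gcongr
      _ = b ^ ((k + 1).choose 2) := by
        rw [← hr2, ← pow_mul, ← pow_mul, Nat.choose_two_right, Nat.add_sub_cancel,
          Nat.mul_div_cancel' (by
            have := (Nat.even_mul_succ_self k).two_dvd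
            rwa [mul_comm] at this), mul_comm]
  rw [le_div_iff₀ (by positivity)]
  calc _ ≤ a ^ ((k + 1).choose 2) * b ^ ((k + 1).choose 2) := by gcongr
    _ = 2 ^ ((k + 1).choose 2) := by rw [← mul_pow, hb, mul_div_cancel₀ _ ha.ne']

/-- The real polynomial Bohnenblust–Hille constants satisfy
`limsup_{m→∞} D_{ℝ,m}^{1/m} ≥ 2`. -/
theorem real_BH_limsup_ge_two :
    2 ≤ limsup (fun m : ℕ => BHconst m ^ ((m : ℝ)⁻¹)) atTop := by
  have hbdd : IsBoundedUnder (· ≤ ·) atTop (fun m : ℕ => BHconst m ^ ((m : ℝ)⁻¹)) := by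
    refine isBoundedUnder_of_eventually_le (a := 8) ?_
    filter_upwards [eventually_ge_atTop 1] with m hm
    calc BHconst m ^ ((m : ℝ)⁻¹) ≤ ((8 : ℝ) ^ m) ^ ((m : ℝ)⁻¹) :=
          Real.rpow_le_rpow (BHconst_nonneg m) (BHconst_le m hm) (by positivity)
      _ = 8 := Real.pow_rpow_inv_natCast (by norm_num) (by omega)
  refine le_of_forall_lt_imp_le_of_dense fun a' ha' => ?_
  refine le_trans (le_max_left a' 1) ?_
  set a := max a' 1 with hadef
  have ha : 0 < a := lt_of_lt_of_le one_pos (le_max_right _ _)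
  have ha2 : a < 2 := max_lt ha' (by norm_num)
  refine le_limsup_of_frequently_le ?_ hbdd
  refine tendsto_choose_two.frequently (Eventually.frequently ?_)
  filter_upwards [growth a ha ha2, eventually_ge_atTop 2] with n h1 hn
  have hm : n.choose 2 ≠ 0 := (Nat.choose_pos hn).ne'
  calc a = (a ^ (n.choose 2)) ^ (((n.choose 2 : ℕ) : ℝ)⁻¹) :=
        (Real.pow_rpow_inv_natCast ha.le hm).symm
    _ ≤ _ := Real.rpow_le_rpow (by positivity) (h1.trans (le_BHconst n hn)) (by positivity)
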